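/- arXiv:1409.2289 — 2 statements merged into one kernel-verified Lean document; each statement's English description precedes it below -/
import Mathlib

section
/- Let d = 1, C > 0, t₀ > 0, and u₀(x) = C e^{−x²/(4t₀)}. Let u_k be the heat-kernel derivative approximation of order k built from u₀. Fix t with 0 < t < t₀. Then there exists a constant B > 0, independent of k, such that for every sufficiently large k, |u_k(0,t)| ≥ B (t₀/t)^{⌊k/2⌋} √(1/(⌊k/2⌋ − 1)). -/
open MeasureTheory Real Filter

noncomputable section

/-- The one-dimensional heat kernel `G(x,t) = (4πt)^{-1/2} exp(-x²/(4t))`. -/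
def heatKernel1 (x t : ℝ) : ℝ :=
  (4 * π * t) ^ (-(1 : ℝ) / 2) * Real.exp (-x ^ 2 / (4 * t))

/-- The one-dimensional heat-kernel derivative approximation of order `k`:
`u_k(x,t) = ∑_{j=0}^k ((-1)^j/j!) (∫ y^j u₀(y) dy) ∂_x^j G(x,t)`. -/
def heatApprox1 (k : ℕ) (u₀ : ℝ → ℝ) (x t : ℝ) : ℝ :=
  ∑ j ∈ Finset.range (k + 1),
    ((-1 : ℝ) ^ j / (j.factorial : ℝ)) * (∫ y, y ^ j * u₀ y) *
      iteratedDeriv j (fun z => heatKernel1 z t) x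

open scoped Nat

/- For Gaussian data both the moments and the kernel derivatives at `0` of odd order vanish, and
those of order `2m` combine to `u_k(0,t) = C √(t₀/t) ∑_{m ≤ k/2} (-t₀/(4t))^m binom(2m,m)`. These
are the partial sums of the binomial series of `(1 - 4z)^{-1/2}` at `z = -t₀/(4t)`, and
`t < t₀` puts `z` outside the closed disc of convergence `|z| ≤ 1/4`. There the terms alternate in
sign and eventually grow geometrically, so a partial sum is comparable to its last term, and
`binom(2m,m) ≥ 4^m / (2√m)`. -/

theorem sum_range_succ_eq_sum_two_mul {M : Type*} [AddCommMonoid M] {f : ℕ → M}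
    (hf : ∀ j, Odd j → f j = 0) (k : ℕ) :
    ∑ j ∈ Finset.range (k + 1), f j = ∑ m ∈ Finset.range (k / 2 + 1), f (2 * m) := by
  refine (Finset.sum_of_injOn (2 * ·) (mul_right_injective₀ two_ne_zero).injOn
    (fun m hm => ?_) (fun j hj hj_notMem => hf j ?_) fun _ _ => rfl).symm
  · simp only [Finset.coe_range, Set.mem_Iio] at hm ⊢
    omega
  · rw [← Nat.not_even_iff_odd]
    rintro ⟨m, rfl⟩
    refine hj_notMem ⟨m, ?_, two_mul m⟩
    simp only [Finset.coe_range, Set.mem_Iio, Finset.mem_range] at hj ⊢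
    omega

theorem abs_alternating_sum_le_add {R : Type*} [CommRing R] [LinearOrder R]
    [IsStrictOrderedRing R] {b : ℕ → R} {M n : ℕ} (hM : 0 ≤ b M)
    (hb : MonotoneOn b (Set.Ici M)) (hn : M ≤ n) :
    |∑ m ∈ Finset.range (n + 1), (-1) ^ m * b m| ≤
      |∑ m ∈ Finset.range (M + 1), (-1) ^ m * b m| + b n := by
  set A : ℕ → R := fun n => ∑ m ∈ Finset.range (n + 1), (-1) ^ m * b m
  -- This recursion exchanges the two bounds on `(-1)^n A n` in `signed_bounds`, which is why they
  -- are proved together.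
  have signed_succ (n : ℕ) : (-1) ^ (n + 1) * A (n + 1) = b (n + 1) - (-1) ^ n * A n := by
    simp only [A, Finset.sum_range_succ _ (n + 1)]
    linear_combination b (n + 1) * Even.neg_one_pow (α := R) ⟨n + 1, rfl⟩
  have abs_signed (n : ℕ) : |(-1) ^ n * A n| = |A n| := by simp [abs_mul]
  have signed_bounds : -|A M| ≤ (-1) ^ n * A n ∧ (-1) ^ n * A n ≤ |A M| + b n := by
    induction n, hn using Nat.le_induction with
    | base =>
      rw [← abs_signed M]
      exact ⟨neg_abs_le _, le_add_of_le_of_nonneg (le_abs_self _) hM⟩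
    | succ n hn ih =>
      have hmono : b n ≤ b (n + 1) := hb hn (Nat.le_succ_of_le hn) n.le_succ
      rw [signed_succ]
      constructor <;> linarith
  have last_nonneg : 0 ≤ b n := hM.trans (hb Set.self_mem_Ici hn hn)
  rw [← abs_signed n, abs_le]
  constructor <;> linarith

theorem eventually_mul_le_abs_alternating_sum {b : ℕ → ℝ} {q c : ℝ} (hq : 1 < q)
    (hb : ∀ᶠ n in atTop, 0 < b n) (hgrow : ∀ᶠ n in atTop, q * b n ≤ b (n + 1))
    (hc : c < 1 - q⁻¹) :
    ∀ᶠ n in atTop, c * b n ≤ |∑ m ∈ Finset.range (n + 1), (-1) ^ m * b m| := by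
  obtain ⟨M, hM⟩ := eventually_atTop.1 (hb.and hgrow)
  set A : ℕ → ℝ := fun n => ∑ m ∈ Finset.range (n + 1), (-1) ^ m * b m
  have b_mono : MonotoneOn b (Set.Ici M) := monotoneOn_nat_Ici_of_le_succ fun n hn =>
    (le_mul_of_one_le_left (hM n hn).1.le hq.le).trans (hM n hn).2
  have b_tendsto : Tendsto b atTop atTop := by
    rw [← tendsto_add_atTop_iff_nat M]
    refine tendsto_atTop_of_geom_le (by simpa using (hM M le_rfl).1) hq fun n => ?_
    simpa only [add_right_comm] using (hM (n + M) (Nat.le_add_left M n)).2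
  have eventually_absorb : ∀ᶠ n in atTop, |A M| ≤ (1 - q⁻¹ - c) * b n :=
    (b_tendsto.const_mul_atTop (sub_pos.2 hc)).eventually_ge_atTop _
  filter_upwards [eventually_absorb, eventually_ge_atTop (M + 1)] with n habsorb hn
  obtain ⟨n, rfl⟩ := Nat.exists_eq_add_of_le' (Nat.one_le_of_lt hn)
  replace hn : M ≤ n := Nat.le_of_succ_le_succ hn
  have previous_le : |A n| ≤ |A M| + b n := abs_alternating_sum_le_add (hM M le_rfl).1.le b_mono hn
  have last_le : b (n + 1) ≤ |A (n + 1)| + |A n| :=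
    calc b (n + 1) ≤ |b (n + 1)| := le_abs_self _
      _ = |A (n + 1) - A n| := by simp [A, Finset.sum_range_succ _ (n + 1), abs_mul]
      _ ≤ |A (n + 1)| + |A n| := abs_sub _ _
  have b_le : b n ≤ q⁻¹ * b (n + 1) := by
    rw [← div_eq_inv_mul, le_div_iff₀' (by positivity)]
    exact (hM n hn).2
  linarith

theorem two_pow_mul_factorial_mul_doubleFactorial (m : ℕ) :
    2 ^ m * m ! * (2 * m - 1)‼ = (2 * m)! := by
  cases m with
  | zero => rfl
  | succ m =>
    rw [← Nat.doubleFactorial_two_mul]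
    exact (Nat.factorial_eq_mul_doubleFactorial (2 * m + 1)).symm

theorem four_pow_mul_sq_doubleFactorial (m : ℕ) :
    4 ^ m * (2 * m - 1)‼ ^ 2 = m.centralBinom * (2 * m)! := by
  have hchoose : m.centralBinom * m ! * m ! = (2 * m)! := by
    rw [Nat.centralBinom_eq_two_mul_choose, two_mul, Nat.add_choose_mul_factorial_mul_factorial]
  refine Nat.eq_of_mul_eq_mul_left (pow_pos m.factorial_pos 2) ?_
  calc m ! ^ 2 * (4 ^ m * (2 * m - 1)‼ ^ 2) = (2 ^ m * m ! * (2 * m - 1)‼) ^ 2 := by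
        rw [show 4 = 2 ^ 2 from rfl, ← pow_mul]; ring
    _ = m.centralBinom * m ! * m ! * (2 * m)! := by
        rw [two_pow_mul_factorial_mul_doubleFactorial, hchoose, sq]
    _ = m ! ^ 2 * (m.centralBinom * (2 * m)!) := by ring

theorem sq_four_pow_le_mul_sq_centralBinom {n : ℕ} (hn : 1 ≤ n) :
    (4 ^ n) ^ 2 ≤ n * (2 * n.centralBinom) ^ 2 := by
  induction n, hn using Nat.le_induction with
  | base => simp [Nat.centralBinom]
  | succ n _ ih =>
    refine Nat.le_of_mul_le_mul_left ?_ n.succ_pos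
    calc (n + 1) * (4 ^ (n + 1)) ^ 2 = 16 * (n + 1) * (4 ^ n) ^ 2 := by ring
      _ ≤ 16 * (n + 1) * (n * (2 * n.centralBinom) ^ 2) := by gcongr
      _ = 16 * (n * (n + 1)) * (2 * n.centralBinom) ^ 2 := by ring
      _ ≤ (2 * (2 * n + 1)) ^ 2 * (2 * n.centralBinom) ^ 2 := by gcongr; nlinarith
      _ = 4 * (2 * (2 * n + 1) * n.centralBinom) ^ 2 := by ring
      _ = (n + 1) * ((n + 1) * (2 * (n + 1).centralBinom) ^ 2) := by
        rw [← Nat.succ_mul_centralBinom_succ]; ring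

theorem four_pow_div_sqrt_le_two_mul_centralBinom (n : ℕ) :
    4 ^ n / √n ≤ 2 * (n.centralBinom : ℝ) := by
  rcases n.eq_zero_or_pos with rfl | hn
  · simp
  rw [div_le_iff₀' (by positivity)]
  refine le_of_sq_le_sq ?_ (by positivity)
  rw [mul_pow, Real.sq_sqrt n.cast_nonneg]
  exact_mod_cast sq_four_pow_le_mul_sq_centralBinom hn

theorem eventually_mul_pow_mul_centralBinom_le_succ {q x : ℝ} (hx : 0 ≤ x) (hq : q < 4 * x) :
    ∀ᶠ n : ℕ in atTop,
      q * (x ^ n * n.centralBinom) ≤ x ^ (n + 1) * (n + 1).centralBinom := by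
  filter_upwards [tendsto_natCast_atTop_atTop.eventually_ge_atTop ((q - 2 * x) / (4 * x - q))]
    with n hn
  rw [div_le_iff₀ (sub_pos.2 hq)] at hn
  have hrec : ((n : ℝ) + 1) * (n + 1).centralBinom = 2 * (2 * n + 1) * n.centralBinom := by
    exact_mod_cast n.succ_mul_centralBinom_succ
  refine le_of_mul_le_mul_left ?_ (n.cast_add_one_pos (α := ℝ))
  calc ((n : ℝ) + 1) * (q * (x ^ n * n.centralBinom))
      = q * (n + 1) * (x ^ n * n.centralBinom) := by ring
    _ ≤ x * (2 * (2 * n + 1)) * (x ^ n * n.centralBinom) := by gcongr ?_ * _; linarith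
    _ = x ^ (n + 1) * (2 * (2 * n + 1) * n.centralBinom) := by ring
    _ = (n + 1) * (x ^ (n + 1) * (n + 1).centralBinom) := by rw [← hrec]; ring

theorem exists_mul_pow_div_sqrt_le_abs_sum_neg_pow_mul_centralBinom {x : ℝ} (hx : 1 / 4 < x) :
    ∃ c > (0 : ℝ), ∀ᶠ n : ℕ in atTop,
      c * ((4 * x) ^ n / √n) ≤ |∑ m ∈ Finset.range (n + 1), (-x) ^ m * m.centralBinom| := by
  have hx₀ : 0 < x := by linarith
  obtain ⟨q, hq₁, hq⟩ : ∃ q, 1 < q ∧ q < 4 * x := exists_between (by linarith)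
  obtain ⟨c, hc₀, hc⟩ : ∃ c, 0 < c ∧ c < 1 - q⁻¹ :=
    exists_between (sub_pos.2 (inv_lt_one_of_one_lt₀ hq₁))
  have term_pos (n : ℕ) : 0 < x ^ n * n.centralBinom :=
    mul_pos (pow_pos hx₀ n) (mod_cast n.centralBinom_pos)
  refine ⟨c / 2, half_pos hc₀, ?_⟩
  filter_upwards [eventually_mul_le_abs_alternating_sum hq₁ (.of_forall term_pos)
    (eventually_mul_pow_mul_centralBinom_le_succ hx₀.le hq) hc] with n hn
  calc c / 2 * ((4 * x) ^ n / √n) = c / 2 * x ^ n * (4 ^ n / √n) := by rw [mul_pow]; ring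
    _ ≤ c / 2 * x ^ n * (2 * n.centralBinom) := by
      gcongr; exact four_pow_div_sqrt_le_two_mul_centralBinom n
    _ = c * (x ^ n * n.centralBinom) := by ring
    _ ≤ |∑ m ∈ Finset.range (n + 1), (-1) ^ m * (x ^ m * m.centralBinom)| := hn
    _ = |∑ m ∈ Finset.range (n + 1), (-x) ^ m * m.centralBinom| := by
      simp only [neg_pow x, mul_assoc]

theorem integral_pow_two_mul_mul_exp_neg_mul_sq {b : ℝ} (hb : 0 < b) (m : ℕ) :
    ∫ y : ℝ, y ^ (2 * m) * Real.exp (-b * y ^ 2) = (2 * m - 1)‼ / (2 * b) ^ m * √(π / b) := by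
  have half_line : ∫ y in Set.Ioi (0 : ℝ), y ^ (2 * m) * Real.exp (-b * y ^ 2) =
      b ^ (-((2 * m : ℕ) + 1 : ℝ) / 2) * (1 / 2) * Real.Gamma (((2 * m : ℕ) + 1 : ℝ) / 2) := by
    have exponent_gt : -1 < ((2 * m : ℕ) : ℝ) := neg_one_lt_zero.trans_le (Nat.cast_nonneg _)
    rw [← integral_rpow_mul_exp_neg_mul_rpow two_pos exponent_gt hb]
    simp only [Real.rpow_natCast, Real.rpow_two]
  have rpow_eq : b ^ (-((2 * m : ℕ) + 1 : ℝ) / 2) = (b ^ m)⁻¹ * (√b)⁻¹ := by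
    rw [Real.sqrt_eq_rpow, ← Real.rpow_natCast, ← Real.rpow_neg hb.le, ← Real.rpow_neg hb.le,
      ← Real.rpow_add hb]
    push_cast
    ring_nf
  have even_extension := integral_comp_abs (f := fun y : ℝ => y ^ (2 * m) * Real.exp (-b * y ^ 2))
  simp only [(even_two_mul m).pow_abs, sq_abs] at even_extension
  rw [even_extension, half_line, rpow_eq,
    show ((2 * m : ℕ) + 1 : ℝ) / 2 = m + 1 / 2 by push_cast; ring, Real.Gamma_nat_add_half,
    Real.sqrt_div pi_pos.le, mul_pow]
  field_simp

theorem iteratedDeriv_heatKernel1 {t : ℝ} (ht : 0 < t) (j : ℕ) (x : ℝ) :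
    iteratedDeriv j (fun z => heatKernel1 z t) x =
      (-(√(2 * t))⁻¹) ^ j * Polynomial.aeval ((√(2 * t))⁻¹ * x) (Polynomial.hermite j) *
        heatKernel1 x t := by
  have rescale (z : ℝ) : heatKernel1 z t =
      (4 * π * t) ^ (-(1 : ℝ) / 2) * Real.exp (-(((√(2 * t))⁻¹ * z) ^ 2 / 2)) := by
    rw [heatKernel1, mul_pow, inv_pow, Real.sq_sqrt (by positivity)]
    congr 2
    field_simp
    norm_num
  simp only [rescale]
  rw [iteratedDeriv_const_mul_field,
    iteratedDeriv_comp_const_mul (f := fun y => Real.exp (-(y ^ 2 / 2))) (by fun_prop),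
    iteratedDeriv_eq_iterate]
  beta_reduce
  rw [Polynomial.deriv_gaussian_eq_hermite_mul_gaussian, neg_pow (√(2 * t))⁻¹]
  ring

theorem iteratedDeriv_heatKernel1_zero_of_odd {t : ℝ} (ht : 0 < t) {j : ℕ} (hj : Odd j) :
    iteratedDeriv j (fun z => heatKernel1 z t) 0 = 0 := by
  rw [iteratedDeriv_heatKernel1 ht, mul_zero, ← Polynomial.coeff_zero_eq_aeval_zero',
    Polynomial.coeff_hermite_of_odd_add (by rwa [add_zero]), map_zero, mul_zero, zero_mul]

theorem iteratedDeriv_two_mul_heatKernel1_zero {t : ℝ} (ht : 0 < t) (m : ℕ) :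
    iteratedDeriv (2 * m) (fun z => heatKernel1 z t) 0 =
      (-1) ^ m * (2 * m - 1)‼ / (2 * t) ^ m * (√(4 * π * t))⁻¹ := by
  have hermite_zero := Polynomial.coeff_hermite_explicit m 0
  rw [add_zero, Nat.choose_zero_right, Nat.cast_one, mul_one] at hermite_zero
  have kernel_zero : heatKernel1 0 t = (√(4 * π * t))⁻¹ := by
    rw [heatKernel1, neg_div, Real.rpow_neg (by positivity), ← Real.sqrt_eq_rpow]
    simp
  rw [iteratedDeriv_heatKernel1 ht, mul_zero, ← Polynomial.coeff_zero_eq_aeval_zero',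
    hermite_zero, kernel_zero, pow_mul, neg_sq, inv_pow, Real.sq_sqrt (by positivity),
    inv_pow]
  simp only [algebraMap_int_eq, eq_intCast]
  push_cast
  ring

theorem heatApprox1_gaussian_zero (C : ℝ) {t₀ t : ℝ} (ht₀ : 0 < t₀) (ht : 0 < t) (k : ℕ) :
    heatApprox1 k (fun x => C * Real.exp (-x ^ 2 / (4 * t₀))) 0 t =
      C * √(t₀ / t) *
        ∑ m ∈ Finset.range (k / 2 + 1), (-(t₀ / (4 * t))) ^ m * m.centralBinom := by
  have moment (m : ℕ) : ∫ y : ℝ, y ^ (2 * m) * (C * Real.exp (-y ^ 2 / (4 * t₀))) =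
      C * ((2 * m - 1)‼ * (2 * t₀) ^ m * √(4 * π * t₀)) := by
    simp only [mul_left_comm _ C, integral_const_mul,
      show ∀ y : ℝ, -y ^ 2 / (4 * t₀) = -(4 * t₀)⁻¹ * y ^ 2 by intro y; ring]
    rw [integral_pow_two_mul_mul_exp_neg_mul_sq (by positivity),
      show π / (4 * t₀)⁻¹ = 4 * π * t₀ by field_simp,
      show 2 * (4 * t₀)⁻¹ = (2 * t₀)⁻¹ by field_simp; norm_num, inv_pow, div_inv_eq_mul]
  have centralBinom_eq (m : ℕ) :
      (m.centralBinom : ℝ) = 4 ^ m * (2 * m - 1)‼ ^ 2 / (2 * m)! := by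
    rw [eq_div_iff (by positivity)]
    exact_mod_cast (four_pow_mul_sq_doubleFactorial m).symm
  rw [heatApprox1, sum_range_succ_eq_sum_two_mul fun j hj => by
    rw [iteratedDeriv_heatKernel1_zero_of_odd ht hj, mul_zero], Finset.mul_sum]
  refine Finset.sum_congr rfl fun m _ => ?_
  rw [moment, iteratedDeriv_two_mul_heatKernel1_zero ht, centralBinom_eq,
    Real.sqrt_div ht₀.le, Real.sqrt_mul (by positivity) t₀, Real.sqrt_mul (by positivity) t,
    (even_two_mul m).neg_one_pow]
  have powers : (2 * t₀) ^ m * ((-1) ^ m / (2 * t) ^ m) = (-(t₀ / (4 * t))) ^ m * 4 ^ m := by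
    rw [← div_pow, ← mul_pow, ← mul_pow]
    congr 1
    field_simp
  have roots : √(4 * π) * √t₀ * (√(4 * π) * √t)⁻¹ = √t₀ / √t := by
    field_simp
  rw [← roots]
  linear_combination C * (√(4 * π) * √t₀ * (√(4 * π) * √t)⁻¹) * (2 * m - 1)‼ ^ 2 / (2 * m)! * powers

theorem sqrt_one_div_sub_one_le_two_div_sqrt {y : ℝ} (hy : 2 ≤ y) : √(1 / (y - 1)) ≤ 2 / √y := by
  rw [Real.sqrt_le_left (by positivity), div_pow, Real.sq_sqrt (by linarith),
    div_le_div_iff₀ (by linarith) (by linarith)]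
  linarith

/-- Divergence, `d = 1`: for `0 < t < t₀` there is `B > 0`, independent
of `k`, with `|u_k(0,t)| ≥ B (t₀/t)^{⌊k/2⌋} √(1/(⌊k/2⌋ - 1))` for all large `k`. -/
theorem stmt_12 (C t₀ : ℝ) (hC : 0 < C) (ht₀ : 0 < t₀) (t : ℝ) (ht : 0 < t)
    (htt₀ : t < t₀) :
    ∃ B > (0 : ℝ), ∀ᶠ k : ℕ in atTop,
      B * (t₀ / t) ^ (k / 2) * Real.sqrt (1 / (((k / 2 : ℕ) : ℝ) - 1)) ≤
        |heatApprox1 k (fun x => C * Real.exp (-x ^ 2 / (4 * t₀))) 0 t| := by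
  obtain ⟨c, hc, hsum⟩ := exists_mul_pow_div_sqrt_le_abs_sum_neg_pow_mul_centralBinom
    (x := t₀ / (4 * t)) (by rw [div_lt_div_iff₀ (by positivity) (by positivity)]; linarith)
  have hA : 0 < C * √(t₀ / t) := by positivity
  have hhalf : Tendsto (fun k : ℕ => k / 2) atTop atTop := Nat.tendsto_div_const_atTop two_ne_zero
  refine ⟨C * √(t₀ / t) * c / 2, by positivity, ?_⟩
  filter_upwards [hhalf.eventually hsum, hhalf.eventually_ge_atTop 2] with k hk hk₂
  rw [heatApprox1_gaussian_zero C ht₀ ht, abs_mul, abs_of_pos hA]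
  generalize k / 2 = n at hk hk₂ ⊢
  calc C * √(t₀ / t) * c / 2 * (t₀ / t) ^ n * √(1 / ((n : ℝ) - 1))
      ≤ C * √(t₀ / t) * c / 2 * (t₀ / t) ^ n * (2 / √n) := by
        gcongr
        exact sqrt_one_div_sub_one_le_two_div_sqrt (mod_cast hk₂)
    _ = C * √(t₀ / t) * (c * ((4 * (t₀ / (4 * t))) ^ n / √n)) := by
        rw [show 4 * (t₀ / (4 * t)) = t₀ / t by field_simp]; ring
    _ ≤ _ := by gcongr

end
end

section
/- There exists a constant B > 0 such that for every sufficiently large natural number k, | Γ((k+1)/2) / Γ(k/2 + 1) − √(2/k) | ≤ B/k, where Γ is the real Gamma function. -/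
open Real Filter

/-!
Log-convexity of `Γ` on `[x, x + 1]` and on `[x + s, x + s + 1]`, combined with the functional
equation, gives Wendel's bounds `(x + s) ^ (s - 1) ≤ Γ(x + s) / Γ(x + 1) ≤ x ^ (s - 1)` for
`0 ≤ s ≤ 1`. By Bernoulli's inequality for the nonpositive exponent `s - 1`, the lower bound is at
least `1 - s (1 - s) / x` times the upper one, so the quotient is `x ^ (s - 1)` up to a relative
error `O(1 / x)`. The theorem is the case `s = 1 / 2`, with `k / 2` in place of `x`.
-/

section Bernoulli

variable {p t x : ℝ}

lemma one_add_mul_self_le_rpow_one_add_of_nonpos (ht : -1 < t) (hp : p ≤ 0) :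
    1 + p * t ≤ (1 + t) ^ p := by
  have h_pos : 0 < 1 + t := by linarith
  have h_log : log (1 + t) ≤ t := by linarith [log_le_sub_one_of_pos h_pos]
  calc 1 + p * t ≤ log (1 + t) * p + 1 := by linarith [mul_le_mul_of_nonpos_left h_log hp]
    _ ≤ exp (log (1 + t) * p) := add_one_le_exp _
    _ = (1 + t) ^ p := (rpow_def_of_pos h_pos p).symm

lemma rpow_mul_one_add_mul_div_le_rpow_add (hx : 0 < x) (ht : -x < t) (hp : p ≤ 0) :
    x ^ p * (1 + p * (t / x)) ≤ (x + t) ^ p := by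
  have h_ratio : -1 < t / x := by rwa [lt_div_iff₀ hx, neg_one_mul]
  calc x ^ p * (1 + p * (t / x)) ≤ x ^ p * (1 + t / x) ^ p := by
        gcongr
        exact one_add_mul_self_le_rpow_one_add_of_nonpos h_ratio hp
    _ = (x + t) ^ p := by
        rw [← mul_rpow hx.le (by linarith), mul_one_add, mul_div_cancel₀ t hx.ne']

end Bernoulli

section Wendel

variable {x s : ℝ}

lemma Gamma_add_le_rpow_mul_Gamma (hx : 0 < x) (hs₀ : 0 ≤ s) (hs₁ : s ≤ 1) :
    Gamma (x + s) ≤ x ^ s * Gamma x := by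
  rcases hs₀.eq_or_lt with rfl | hs₀
  · simp
  rcases hs₁.eq_or_lt with rfl | hs₁
  · rw [Gamma_add_one hx.ne', rpow_one]
  have h_gamma : 0 < Gamma x := Gamma_pos_of_pos hx
  calc Gamma (x + s) = Gamma ((1 - s) * x + s * (x + 1)) := by ring_nf
    _ ≤ Gamma x ^ (1 - s) * Gamma (x + 1) ^ s :=
        Gamma_mul_add_mul_le_rpow_Gamma_mul_rpow_Gamma hx (by linarith) (by linarith) hs₀
          (by ring)
    _ = x ^ s * (Gamma x ^ (1 - s) * Gamma x ^ s) := by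
        rw [Gamma_add_one hx.ne', mul_rpow hx.le h_gamma.le]
        ring
    _ = x ^ s * Gamma x := by rw [← rpow_add h_gamma, sub_add_cancel, rpow_one]

lemma Gamma_add_div_Gamma_add_one_le_rpow (hx : 0 < x) (hs₀ : 0 ≤ s) (hs₁ : s ≤ 1) :
    Gamma (x + s) / Gamma (x + 1) ≤ x ^ (s - 1) := by
  rw [div_le_iff₀ (Gamma_pos_of_pos (by linarith)), Gamma_add_one hx.ne', ← mul_assoc,
    ← rpow_add_one hx.ne', sub_add_cancel]
  exact Gamma_add_le_rpow_mul_Gamma hx hs₀ hs₁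

lemma rpow_le_Gamma_add_div_Gamma_add_one (hx : 0 < x) (hs₀ : 0 ≤ s) (hs₁ : s ≤ 1) :
    (x + s) ^ (s - 1) ≤ Gamma (x + s) / Gamma (x + 1) := by
  have hxs : 0 < x + s := by linarith
  have h_upper : Gamma (x + 1) ≤ (x + s) ^ (1 - s) * Gamma (x + s) := by
    simpa only [add_add_sub_cancel] using
      Gamma_add_le_rpow_mul_Gamma hxs (sub_nonneg.2 hs₁) (sub_le_self 1 hs₀)
  rwa [le_div_iff₀ (Gamma_pos_of_pos (by linarith)), ← neg_sub, rpow_neg hxs.le,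
    inv_mul_le_iff₀ (rpow_pos_of_pos hxs _)]

theorem abs_Gamma_add_div_Gamma_add_one_sub_rpow_le (hx : 0 < x) (hs₀ : 0 ≤ s) (hs₁ : s ≤ 1) :
    |Gamma (x + s) / Gamma (x + 1) - x ^ (s - 1)| ≤ x ^ (s - 1) * (s * (1 - s) / x) := by
  have h_upper := Gamma_add_div_Gamma_add_one_le_rpow hx hs₀ hs₁
  have h_lower : x ^ (s - 1) * (1 + (s - 1) * (s / x)) ≤ Gamma (x + s) / Gamma (x + 1) :=
    (rpow_mul_one_add_mul_div_le_rpow_add hx (by linarith) (by linarith)).trans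
      (rpow_le_Gamma_add_div_Gamma_add_one hx hs₀ hs₁)
  rw [abs_of_nonpos (sub_nonpos.2 h_upper)]
  linear_combination h_lower

end Wendel

theorem stmt_15_general {x : ℝ} (hx : 0 < x) :
    |Gamma ((x + 1) / 2) / Gamma (x / 2 + 1) - √(2 / x)| ≤ √(2 / x) / 2 / x := by
  have h_rpow : (x / 2) ^ (1 / 2 - 1 : ℝ) = √(2 / x) := by
    rw [show (1 / 2 - 1 : ℝ) = -(1 / 2) by norm_num, rpow_neg (by positivity), ← sqrt_eq_rpow,
      ← sqrt_inv, inv_div]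
  have h_wendel := abs_Gamma_add_div_Gamma_add_one_sub_rpow_le (s := 1 / 2) (half_pos hx)
    (by norm_num) (by norm_num)
  rw [h_rpow, ← add_div] at h_wendel
  convert h_wendel using 1
  ring

/-- there is `B > 0` with
`|Γ((k+1)/2)/Γ(k/2+1) - √(2/k)| ≤ B/k` for all sufficiently large `k`. -/
theorem stmt_15 :
    ∃ B > (0 : ℝ), ∀ᶠ k : ℕ in atTop,
      |Real.Gamma (((k : ℝ) + 1) / 2) / Real.Gamma ((k : ℝ) / 2 + 1) -
          Real.sqrt (2 / (k : ℝ))| ≤ B / (k : ℝ) := by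
  refine ⟨1 / 2, by norm_num, (eventually_ge_atTop 2).mono fun k hk ↦ ?_⟩
  have hk' : (2 : ℝ) ≤ k := mod_cast hk
  refine (stmt_15_general (by linarith)).trans ?_
  gcongr
  exact sqrt_le_one.2 (div_le_one_of_le₀ hk' (by linarith))
end
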